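/- Let k ≥ 1, let U ∈ M_k(ℂ) vary through the powers of the shift-type unitary with U^k = z·I (i.e., work in π_k(C(T)) ⊂ M_k(C(T))), and let A ∈ M_k(ℂ) be positive with Tr(A) = 1. Then the map F_A := π_k⁻¹ ∘ F̃_A ∘ π_k, where F̃_A(x) = Tr(Ax)·I for x ∈ π_k(C(T)), is a conditional expectation from C(T) onto the C*-subalgebra B_k generated by the powers of z^k. -/

import Mathlib

open scoped ComplexOrder
/-- The character `z ↦ z^n` on the unit circle, as a continuous function. -/
noncomputable def circleChar (n : ℤ) : C(Circle, ℂ) :=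
  ⟨fun z => ((z ^ n : Circle) : ℂ), continuous_subtype_val.comp (continuous_zpow n)⟩

/-- The shift-type matrix `U_k ∈ M_k(C(𝕋))`. -/
noncomputable def shiftUnitary (k : ℕ) : Matrix (Fin k) (Fin k) C(Circle, ℂ) :=
  fun i j =>
    if (i : ℕ) = 0 ∧ (j : ℕ) = k - 1 then ⟨fun z => (z : ℂ), continuous_subtype_val⟩
    else if (i : ℕ) = (j : ℕ) + 1 then 1 else 0

/-- `E` is a conditional expectation of `C(𝕋)` onto the C*-subalgebra `B`: a positive,
unital, idempotent, contractive linear `B`-bimodule projection onto `B`. -/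
def IsCondExp (B : StarSubalgebra ℂ C(Circle, ℂ)) (E : C(Circle, ℂ) → C(Circle, ℂ)) : Prop :=
  IsLinearMap ℂ E ∧ (∀ g, E g ∈ B) ∧ (∀ b ∈ B, E b = b) ∧
    (∀ g, ∃ h : C(Circle, ℂ), E (star g * g) = star h * h) ∧
    (∀ b₁ ∈ B, ∀ b₂ ∈ B, ∀ a, E (b₁ * a * b₂) = b₁ * E a * b₂) ∧
    (∀ g, ‖E g‖ ≤ ‖g‖)

open scoped MatrixOrder Matrix.Norms.L2Operator in
/-- The functional `X ↦ Tr(A X)` on matrices is bounded by `Tr A`. -/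
theorem Matrix.PosSemidef.norm_trace_mul_le {n : Type*} [Fintype n] [DecidableEq n]
    {A : Matrix n n ℂ} (hA : A.PosSemidef) (X : Matrix n n ℂ) :
    ‖(A * X).trace‖ ≤ ‖X‖ * A.trace.re := by
  obtain ⟨B, rfl⟩ := CStarAlgebra.nonneg_iff_eq_star_mul_self.mp hA.nonneg
  rw [Matrix.star_eq_conjTranspose]
  let v : n → EuclideanSpace ℂ n := fun i => WithLp.toLp 2 (star (B i))
  have hX : (B.conjTranspose * B * X).trace =
      ∑ i, inner ℂ (v i) (WithLp.toLp 2 (X.mulVec (v i).ofLp) : EuclideanSpace ℂ n) := by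
    rw [Matrix.mul_assoc, Matrix.trace_mul_comm]
    simp only [v, EuclideanSpace.inner_eq_star_dotProduct, Matrix.trace, Matrix.diag_apply,
      star_star]
    refine Finset.sum_congr rfl fun i _ => ?_
    rw [Matrix.mul_assoc, dotProduct_comm]
    rfl
  have hv : (B.conjTranspose * B).trace.re = ∑ i, ‖v i‖ ^ 2 := by
    rw [Matrix.trace_mul_comm]
    simp only [v, EuclideanSpace.norm_sq_eq, Matrix.trace, Matrix.diag_apply, Complex.re_sum,
      Matrix.mul_apply, Matrix.conjTranspose_apply, Pi.star_apply, norm_star]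
    refine Finset.sum_congr rfl fun i _ => Finset.sum_congr rfl fun j _ => ?_
    rw [← starRingEnd_apply, Complex.mul_conj, Complex.ofReal_re, Complex.normSq_eq_norm_sq]
  rw [hX, hv, Finset.mul_sum]
  refine (norm_sum_le _ _).trans (Finset.sum_le_sum fun i _ => ?_)
  calc _ ≤ ‖v i‖ * ‖(WithLp.toLp 2 (X.mulVec (v i).ofLp) : EuclideanSpace ℂ n)‖ :=
        norm_inner_le_norm _ _
    _ ≤ ‖v i‖ * (‖X‖ * ‖v i‖) := by gcongr; exact Matrix.l2_opNorm_mulVec X (v i)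
    _ = ‖X‖ * ‖v i‖ ^ 2 := by ring

/-- Evaluation at a point of a matrix of continuous functions. -/
noncomputable def evalMatrix {X : Type*} [TopologicalSpace X] (n : Type*) [Fintype n]
    [DecidableEq n] (x : X) :
    Matrix n n C(X, ℂ) →⋆ₐ[ℂ] Matrix n n ℂ where
  __ := ((ContinuousMap.evalStarAlgHom ℂ ℂ x).toAlgHom).mapMatrix
  map_star' M := by
    ext i j
    simp [Matrix.star_apply]

@[simp]
theorem evalMatrix_apply {X : Type*} [TopologicalSpace X] {n : Type*} [Fintype n] [DecidableEq n]
    (x : X) (M : Matrix n n C(X, ℂ)) (i j : n) : evalMatrix n x M i j = M i j x := rfl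

/-- The map `M ↦ Tr(A M)` on matrices of continuous functions. -/
noncomputable def traceMulLeft {X : Type*} [TopologicalSpace X] {n : Type*} [Fintype n]
    (A : Matrix n n ℂ) :
    Matrix n n C(X, ℂ) →ₗ[ℂ] C(X, ℂ) where
  toFun M := ∑ i, ∑ j, A i j • M j i
  map_add' M N := by
    ext x
    simp [Finset.sum_add_distrib]
  map_smul' c M := by simp [Finset.smul_sum, smul_comm c]

section traceMulLeft

variable {X : Type*} [TopologicalSpace X] {n : Type*} [Fintype n] [DecidableEq n]

theorem traceMulLeft_apply_eq_trace (A : Matrix n n ℂ) (M : Matrix n n C(X, ℂ)) (x : X) :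
    traceMulLeft A M x = (A * evalMatrix n x M).trace := by
  simp [traceMulLeft, Matrix.trace, Matrix.mul_apply]

theorem traceMulLeft_diagonal_mul (A : Matrix n n ℂ) (f : C(X, ℂ)) (M : Matrix n n C(X, ℂ)) :
    traceMulLeft A (Matrix.diagonal (fun _ => f) * M) = f * traceMulLeft A M := by
  simp only [traceMulLeft, LinearMap.coe_mk, AddHom.coe_mk, Matrix.diagonal_mul, Finset.mul_sum,
    mul_smul_comm]

theorem traceMulLeft_one {A : Matrix n n ℂ} (htrA : A.trace = 1) :
    traceMulLeft A (1 : Matrix n n C(X, ℂ)) = 1 := by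
  ext x
  rw [traceMulLeft_apply_eq_trace, map_one, mul_one, htrA, ContinuousMap.one_apply]

theorem traceMulLeft_star_mul_self_nonneg {A : Matrix n n ℂ} (hA : A.PosSemidef)
    (M : Matrix n n C(X, ℂ)) : 0 ≤ traceMulLeft A (star M * M) := by
  intro x
  change 0 ≤ traceMulLeft A (star M * M) x
  rw [traceMulLeft_apply_eq_trace, map_mul, map_star, ← Matrix.mul_assoc, Matrix.trace_mul_comm,
    ← Matrix.mul_assoc, Matrix.star_eq_conjTranspose]
  exact (hA.mul_mul_conjTranspose_same _).trace_nonneg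

open scoped Matrix.Norms.L2Operator in
theorem norm_traceMulLeft_starAlgHom_le [CompactSpace X] {A : Matrix n n ℂ} (hA : A.PosSemidef)
    (htrA : A.trace = 1) (π : C(X, ℂ) →⋆ₐ[ℂ] Matrix n n C(X, ℂ)) (g : C(X, ℂ)) :
    ‖traceMulLeft A (π g)‖ ≤ ‖g‖ := by
  refine (ContinuousMap.norm_le _ (norm_nonneg g)).mpr fun x => ?_
  rw [traceMulLeft_apply_eq_trace]
  refine (hA.norm_trace_mul_le _).trans ?_
  rw [htrA, Complex.one_re, mul_one]
  exact NonUnitalStarAlgHom.norm_apply_le ((evalMatrix n x).comp π) g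

end traceMulLeft

@[simp]
theorem circleChar_apply (n : ℤ) (z : Circle) : circleChar n z = ((z ^ n : Circle) : ℂ) := rfl

theorem elemental_circleChar_one : StarAlgebra.elemental ℂ (circleChar 1) = ⊤ := by
  refine ContinuousMap.starSubalgebra_topologicalClosure_eq_top_of_separatesPoints _
    fun z w hzw => ⟨circleChar 1, ⟨circleChar 1, StarAlgebra.self_mem_adjoin_singleton ℂ _, rfl⟩, ?_⟩
  simpa [Circle.ext_iff] using hzw

open scoped CStarAlgebra Matrix.Norms.L2Operator in
theorem starAlgHom_matrix_ext {n : Type*} [Fintype n] [DecidableEq n]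
    {φ ψ : C(Circle, ℂ) →⋆ₐ[ℂ] Matrix n n C(Circle, ℂ)}
    (h : φ (circleChar 1) = ψ (circleChar 1)) : φ = ψ := by
  have key (x : Circle) : (evalMatrix n x).comp φ = (evalMatrix n x).comp ψ := by
    let S := StarAlgHom.equalizer ((evalMatrix n x).comp φ) ((evalMatrix n x).comp ψ)
    have hS : IsClosed (S : Set C(Circle, ℂ)) :=
      isClosed_eq (map_continuous ((evalMatrix n x).comp φ))
        (map_continuous ((evalMatrix n x).comp ψ))
    have hle : StarAlgebra.elemental ℂ (circleChar 1) ≤ S :=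
      StarAlgebra.elemental.le_of_mem hS (congrArg (evalMatrix n x) h)
    rw [elemental_circleChar_one] at hle
    exact StarAlgHom.ext fun g => hle (StarSubalgebra.mem_top (x := g))
  ext g i j x
  exact congrFun₂ (DFunLike.congr_fun (key x) g) i j

/-- The scalar embedding of `C(X)` into the matrices of continuous functions. -/
noncomputable def scalarStarAlgHom (X : Type*) [TopologicalSpace X] (n : Type*) [Fintype n]
    [DecidableEq n] : C(X, ℂ) →⋆ₐ[ℂ] Matrix n n C(X, ℂ) where
  toFun f := Matrix.diagonal fun _ => f
  map_one' := Matrix.diagonal_one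
  map_mul' _ _ := (Matrix.diagonal_mul_diagonal _ _).symm
  map_zero' := Matrix.diagonal_zero
  map_add' _ _ := (Matrix.diagonal_add _ _).symm
  commutes' _ := rfl
  map_star' _ := (Matrix.diagonal_conjTranspose _).symm

/-- Composition with the power map `z ↦ z ^ k` on the circle. -/
noncomputable def compPow (k : ℕ) : C(Circle, ℂ) →⋆ₐ[ℂ] C(Circle, ℂ) :=
  ContinuousMap.compStarAlgHom' ℂ ℂ ⟨fun z => z ^ k, continuous_pow k⟩

theorem compPow_circleChar_one (k : ℕ) : compPow k (circleChar 1) = circleChar k := by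
  ext z
  simp [compPow]

open scoped CStarAlgebra in
theorem compPow_mem (k : ℕ) (f : C(Circle, ℂ)) :
    compPow k f ∈ StarAlgebra.elemental ℂ (circleChar k) := by
  let S := (StarAlgebra.elemental ℂ (circleChar k)).comap (compPow k)
  have hS : IsClosed (S : Set C(Circle, ℂ)) :=
    (StarAlgebra.elemental.isClosed ℂ (circleChar k)).preimage (map_continuous (compPow k))
  have hle : StarAlgebra.elemental ℂ (circleChar 1) ≤ S := by
    refine StarAlgebra.elemental.le_of_mem hS ?_
    change compPow k (circleChar 1) ∈ StarAlgebra.elemental ℂ (circleChar k)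
    rw [compPow_circleChar_one]
    exact StarAlgebra.elemental.self_mem ℂ _
  rw [elemental_circleChar_one] at hle
  exact hle (StarSubalgebra.mem_top (x := f))

theorem exists_compPow_eq {k : ℕ} (hinj : Function.Injective (compPow k)) {b : C(Circle, ℂ)}
    (hb : b ∈ StarAlgebra.elemental ℂ (circleChar k)) : ∃ f, compPow k f = b := by
  have hcl : IsClosed ((compPow k).range : Set C(Circle, ℂ)) :=
    (NonUnitalStarAlgHom.isometry (compPow k) hinj).isClosedEmbedding.isClosed_range
  exact StarAlgebra.elemental.le_of_mem hcl ⟨circleChar 1, compPow_circleChar_one k⟩ hb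

theorem shiftUnitary_pow_apply {k m : ℕ} (hm : m ≤ k) (i j : Fin k) :
    (shiftUnitary k ^ m) i j =
      if (i : ℕ) + k = j + m then circleChar 1 else if (i : ℕ) = j + m then 1 else 0 := by
  induction m generalizing i j with
  | zero =>
    have : (i : ℕ) + k ≠ j + 0 := by omega
    rw [if_neg this, pow_zero, Matrix.one_apply]
    simp [Fin.ext_iff]
  | succ m ih =>
    have hz : (⟨fun z => (z : ℂ), continuous_subtype_val⟩ : C(Circle, ℂ)) = circleChar 1 := by
      ext z
      exact congrArg (fun w : Circle => (w : ℂ)) (zpow_one z).symm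
    rw [pow_succ, Matrix.mul_apply]
    by_cases hj : (j : ℕ) + 1 = k
    · rw [Finset.sum_eq_single ⟨0, by omega⟩]
      · rw [ih (by omega)]
        have h1 : ¬ (i : ℕ) = j + (m + 1) := by omega
        have h2 : ¬ (i : ℕ) + k = 0 + m := by omega
        have h3 : (i : ℕ) + k = j + (m + 1) ↔ (i : ℕ) = 0 + m := by omega
        have h4 : (j : ℕ) = k - 1 := by omega
        rw [if_neg h1, if_congr h3 rfl rfl]
        simp only [shiftUnitary, hz, if_neg h2, h4, and_self, if_true, ite_mul,
          one_mul, zero_mul]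
      · intro l _ hl
        have h1 : ¬ (l : ℕ) = 0 := fun h => hl (Fin.ext h)
        have h2 : ¬ (l : ℕ) = j + 1 := by omega
        simp [shiftUnitary, h1, h2]
      · simp
    · rw [Finset.sum_eq_single ⟨j + 1, by omega⟩]
      · rw [ih (by omega)]
        simp [shiftUnitary, add_assoc, add_comm 1 m]
      · intro l _ hl
        have h1 : ¬ (j : ℕ) = k - 1 := by omega
        have h2 : ¬ (l : ℕ) = j + 1 := fun h => hl (Fin.ext h)
        simp [shiftUnitary, h1, h2]
      · simp

theorem shiftUnitary_pow_self (k : ℕ) :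
    shiftUnitary k ^ k = Matrix.diagonal fun _ => circleChar 1 := by
  ext1 i j
  have h : ¬ (i : ℕ) = j + k := by omega
  rw [shiftUnitary_pow_apply le_rfl, if_neg h, Matrix.diagonal_apply]
  simp only [add_left_inj, Fin.ext_iff]

/-- For a positive matrix `A` with `Tr(A) = 1`, the map
`F_A = π_k⁻¹ ∘ (Tr(A ·) · I) ∘ π_k` is a conditional expectation of `C(𝕋)` onto the
C*-subalgebra `B_k` generated by the powers of `z^k`. -/
theorem trace_conditional_expectation (k : ℕ) (hk : 1 ≤ k)
    (A : Matrix (Fin k) (Fin k) ℂ) (hA : A.PosSemidef) (htrA : A.trace = 1)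
    (hU : shiftUnitary k ∈ unitary (Matrix (Fin k) (Fin k) C(Circle, ℂ)))
    (π : C(Circle, ℂ) →⋆ₐ[ℂ] Matrix (Fin k) (Fin k) C(Circle, ℂ))
    (hπinj : Function.Injective π)
    (hπ : ∀ l : ℤ, π (circleChar l) =
      (((⟨shiftUnitary k, hU⟩ : unitary (Matrix (Fin k) (Fin k) C(Circle, ℂ))) ^ l :
        unitary (Matrix (Fin k) (Fin k) C(Circle, ℂ))) :
        Matrix (Fin k) (Fin k) C(Circle, ℂ))) :
    ∃ E : C(Circle, ℂ) → C(Circle, ℂ),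
      IsCondExp (StarAlgebra.elemental ℂ (circleChar (k : ℤ))) E ∧
      ∀ g : C(Circle, ℂ),
        π (E g) = (∑ i : Fin k, ∑ j : Fin k, A i j • (π g) j i) •
          (1 : Matrix (Fin k) (Fin k) C(Circle, ℂ)) := by
  have hP (f : C(Circle, ℂ)) : π (compPow k f) = Matrix.diagonal fun _ => f := by
    have h : π.comp (compPow k) = scalarStarAlgHom Circle (Fin k) := by
      refine starAlgHom_matrix_ext ?_
      rw [StarAlgHom.comp_apply, compPow_circleChar_one, hπ, zpow_natCast, SubmonoidClass.coe_pow]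
      exact shiftUnitary_pow_self k
    exact DFunLike.congr_fun h f
  have hinj : Function.Injective (compPow k) := fun f g hfg => by
    have h := congrFun₂ ((hP f).symm.trans ((congrArg π hfg).trans (hP g))) ⟨0, hk⟩ ⟨0, hk⟩
    simpa using h
  have hmul (f g : C(Circle, ℂ)) :
      traceMulLeft A (π (compPow k f * g)) = f * traceMulLeft A (π g) := by
    rw [map_mul, hP, traceMulLeft_diagonal_mul]
  refine ⟨fun g => compPow k (traceMulLeft A (π g)), ⟨⟨?_, ?_⟩, ?_, ?_, ?_, ?_, ?_⟩,
    fun g => (hP _).trans (Matrix.smul_one_eq_diagonal _).symm⟩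
  · intro f g
    simp only [map_add]
  · intro c g
    simp only [map_smul]
  · exact fun g => compPow_mem k _
  · intro b hb
    obtain ⟨f, rfl⟩ := exists_compPow_eq hinj hb
    beta_reduce
    rw [← mul_one (compPow k f), hmul, map_one, traceMulLeft_one htrA, mul_one, mul_one]
  · intro g
    obtain ⟨h, hh⟩ := CStarAlgebra.nonneg_iff_eq_star_mul_self.mp
      (traceMulLeft_star_mul_self_nonneg hA (π g))
    exact ⟨compPow k h, by beta_reduce; rw [map_mul π, map_star π, hh, map_mul, map_star]⟩
  · intro b₁ h₁ b₂ h₂ a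
    obtain ⟨f₁, rfl⟩ := exists_compPow_eq hinj h₁
    obtain ⟨f₂, rfl⟩ := exists_compPow_eq hinj h₂
    beta_reduce
    rw [mul_assoc, hmul, mul_comm a, hmul, map_mul, map_mul]
    ring
  · intro g
    exact (NonUnitalStarAlgHom.norm_apply_le (compPow k) _).trans
      (norm_traceMulLeft_starAlgHom_le hA htrA π g)
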